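/- arXiv:0911.0375 — 7 statements merged into one kernel-verified Lean document; each statement's English description precedes it below -/
import Mathlib

section
/- Let n ≥ 1 and 1 ≤ k ≤ n. Let A and B be n×n real symmetric matrices such that σ_j(A) > 0 for every j with 1 ≤ j ≤ k. Define p : ℝ → ℝ by p(t) = σ_k(A + t·B) (a polynomial in t). Then p(0)·p''(0) ≤ ((k−1)/k)·(p'(0))², where p' and p'' denote the first and second derivatives of p. -/
open Matrix

/-- `σ_k` of a real Hermitian (= symmetric) matrix: the `k`-th elementary symmetric
polynomial of its eigenvalues, counted with multiplicity. -/
noncomputable def sigmaEig {n : ℕ} {A : Matrix (Fin n) (Fin n) ℝ}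
    (hA : A.IsHermitian) (k : ℕ) : ℝ :=
  (Finset.univ.val.map hA.eigenvalues).esymm k

lemma isHermitian_smul_real {n : ℕ} {B : Matrix (Fin n) (Fin n) ℝ}
    (hB : B.IsHermitian) (t : ℝ) : (t • B).IsHermitian := by
  unfold Matrix.IsHermitian at *
  rw [Matrix.conjTranspose_smul, hB]
  simp


noncomputable def eS {ι : Type*} (k : ℕ) (S : Finset ι) (x : ι → ℝ) : ℝ :=
  ∑ T ∈ S.powersetCard k, ∏ i ∈ T, x i

lemma eS_zero {ι : Type*} (S : Finset ι) (x : ι → ℝ) : eS 0 S x = 1 := by simp [eS]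

lemma eS_insert {ι : Type*} [DecidableEq ι] (k : ℕ) (S : Finset ι) (x : ι → ℝ) (a : ι)
    (ha : a ∉ S) : eS (k+1) (insert a S) x = eS (k+1) S x + x a * eS k S x := by
  unfold eS
  rw [Finset.powersetCard_succ_insert ha, Finset.sum_union, Finset.sum_image]
  · rw [Finset.mul_sum]
    congr 1
    refine Finset.sum_congr rfl fun T hT => ?_
    rw [Finset.prod_insert]
    exact fun h => ha ((Finset.mem_powersetCard.1 hT).1 h)
  · intro T hT T' hT' h
    have h1 : a ∉ T := fun h => ha ((Finset.mem_powersetCard.1 hT).1 h)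
    have h2 : a ∉ T' := fun h => ha ((Finset.mem_powersetCard.1 hT').1 h)
    rw [← Finset.erase_insert h1, ← Finset.erase_insert h2]
    have h' : insert a T = insert a T' := h
    rw [h']
  · rw [Finset.disjoint_left]
    intro T hT hT'
    obtain ⟨U, hU, rfl⟩ := Finset.mem_image.1 hT'
    exact ha ((Finset.mem_powersetCard.1 hT).1 (Finset.mem_insert_self _ _))

lemma eS_erase {ι : Type*} [DecidableEq ι] (k : ℕ) (S : Finset ι) (x : ι → ℝ) (a : ι)
    (ha : a ∈ S) : eS (k+1) S x = eS (k+1) (S.erase a) x + x a * eS k (S.erase a) x := by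
  rw [← eS_insert k _ x a (Finset.notMem_erase a S), Finset.insert_erase ha]

lemma eS_euler {ι : Type*} [DecidableEq ι] (k : ℕ) (S : Finset ι) (x : ι → ℝ) :
    ∑ i ∈ S, x i * eS k (S.erase i) x = (k+1) * eS (k+1) S x := by
  induction S using Finset.induction_on generalizing k with
  | empty => simp [eS, Finset.powersetCard_eq_empty.2 (show (∅ : Finset ι).card < k + 1 by simp)]
  | insert a S ha ih =>
    rw [Finset.sum_insert ha, Finset.erase_insert ha, eS_insert k S x a ha]
    cases k with
    | zero =>
      have := ih 0
      simp only [eS_zero] at this ⊢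
      push_cast at this ⊢
      linarith
    | succ k =>
      have h1 : ∀ i ∈ S, x i * eS (k+1) ((insert a S).erase i) x =
          x i * eS (k+1) (S.erase i) x + x a * (x i * eS k (S.erase i) x) := by
        intro i hi
        have hne : a ≠ i := fun h => ha (h ▸ hi)
        rw [Finset.erase_insert_of_ne hne, eS_insert]
        · ring
        · exact fun h => ha (Finset.mem_of_mem_erase h)
      rw [Finset.sum_congr rfl h1, Finset.sum_add_distrib, ← Finset.mul_sum, ih, ih]
      push_cast
      ring

open Polynomial in
lemma laguerre (f : ℝ[X]) (hf : f.Splits) (s : ℝ) :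
    f.eval s * (derivative (derivative f)).eval s ≤ ((derivative f).eval s)^2 := by
  have key : ∀ m : Multiset ℝ, ∀ g : ℝ[X], g = (m.map (fun a => X - C a)).prod →
      g.eval s * (derivative (derivative g)).eval s ≤ ((derivative g).eval s)^2 := by
    intro m
    induction m using Multiset.induction_on with
    | empty => rintro g rfl; simp
    | cons a m ih =>
      rintro g rfl
      have := ih _ rfl
      rw [Multiset.map_cons, Multiset.prod_cons]
      set q := (m.map (fun a => X - C a)).prod
      simp only [derivative_mul, derivative_add, derivative_sub, derivative_X, derivative_C,
        eval_mul, eval_add, eval_sub, eval_X, eval_C, sub_zero, one_mul]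
      nlinarith [sq_nonneg (q.eval s), mul_nonneg (sq_nonneg (s - a)) (sub_nonneg.2 this)]
  have h := hf.eq_prod_roots
  have k2 := key f.roots _ rfl
  rw [h]
  simp only [derivative_mul, derivative_C, zero_mul, zero_add, eval_mul, eval_C]
  nlinarith [mul_nonneg (sq_nonneg f.leadingCoeff) (sub_nonneg.2 k2)]

open Polynomial in
lemma splits_derivative (f : ℝ[X]) (hf : f.Splits) : (derivative f).Splits := by
  rw [splits_iff_card_roots] at *
  have h1 := card_roots_le_derivative f
  have h2 := natDegree_derivative_le f
  have h3 := card_roots' (derivative f)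
  omega

open Polynomial in
lemma newton {ι : Type*} (k : ℕ) (S : Finset ι) (x : ι → ℝ) :
    eS k S x * eS (k+2) S x ≤ (eS (k+1) S x)^2 := by
  by_cases hk : k + 2 ≤ S.card
  swap
  · have : eS (k+2) S x = 0 := by
      simp [eS, Finset.powersetCard_eq_empty.2 (not_le.1 hk)]
    rw [this]; nlinarith [sq_nonneg (eS (k+1) S x)]
  obtain ⟨m, hm⟩ := Nat.exists_eq_add_of_le hk
  set f : ℝ[X] := ∏ i ∈ S, (X + C (x i)) with hf
  have hs : f.Splits := by
    apply Splits.prod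
    intro i _
    exact Splits.X_add_C _
  have hs' : (derivative^[m] f).Splits := by
    clear_value f
    clear hm hf
    induction m with
    | zero => simpa
    | succ m ih => rw [Function.iterate_succ_apply']; exact splits_derivative _ ih
  have := laguerre _ hs' 0
  rw [← Function.iterate_succ_apply' (f := derivative), ← Function.iterate_succ_apply' (f := derivative)] at this
  simp only [← coeff_zero_eq_eval_zero, coeff_iterate_derivative] at this
  have c0 : f.coeff m = eS (k+2) S x := by
    rw [hf, Finset.prod_X_add_C_coeff _ _ (by omega)]
    unfold eS; congr 2; omega
  have c1 : f.coeff (m+1) = eS (k+1) S x := by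
    rw [hf, Finset.prod_X_add_C_coeff _ _ (by omega)]
    unfold eS; congr 2; omega
  have c2 : f.coeff (m+1+1) = eS k S x := by
    rw [hf, Finset.prod_X_add_C_coeff _ _ (by omega)]
    unfold eS; congr 2; omega
  simp only [zero_add, Nat.descFactorial_self, c0, c1, c2, Nat.succ_eq_add_one, nsmul_eq_mul,
    Nat.factorial_succ] at this
  push_cast at this
  by_contra hlt
  push Not at hlt
  have hF : (0:ℝ) < (m.factorial : ℝ)^2 * (m+1) := by positivity
  have h2 : (m.factorial : ℝ)^2 * (m+1) * ((m+2) * (eS k S x * eS (k+2) S x)) ≤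
     (m.factorial : ℝ)^2 * (m+1) * ((m+1) * (eS (k+1) S x)^2) := by
    nlinarith
  have h3 := le_of_mul_le_mul_left h2 hF
  have hm0 : (0:ℝ) ≤ m := Nat.cast_nonneg m
  nlinarith [sq_nonneg (eS (k+1) S x), mul_nonneg hm0 (sub_nonneg.2 hlt.le)]

def Gam {ι : Type*} (k : ℕ) (S : Finset ι) (x : ι → ℝ) : Prop := ∀ j ≤ k, 0 < eS j S x

lemma gam_erase {ι : Type*} [DecidableEq ι] (k : ℕ) (S : Finset ι) (x : ι → ℝ)
    (h : Gam (k+1) S x) (i : ι) (hi : i ∈ S) : Gam k (S.erase i) x := by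
  induction k with
  | zero => intro j hj; obtain rfl : j = 0 := by omega
            rw [eS_zero]; norm_num
  | succ k ih =>
    have ih' := ih (fun j hj => h j (by omega))
    intro j hj
    rcases Nat.lt_or_ge j (k+1) with hlt | hge
    · exact ih' j (by omega)
    obtain rfl : j = k+1 := by omega
    have h1 := h (k+1) (by omega)
    have h2 := h (k+1+1) (by omega)
    rw [eS_erase _ _ _ i hi] at h1 h2
    have h0 := ih' k le_rfl
    have hN := newton k (S.erase i) x
    set a0 := eS k (S.erase i) x
    set a1 := eS (k+1) (S.erase i) x
    set a2 := eS (k+2) (S.erase i) x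
    by_contra hn
    push Not at hn
    have e1 : 0 < a0 * (a2 + x i * a1) := mul_pos h0 h2
    nlinarith [mul_nonneg (neg_nonneg.2 hn) h1.le]

lemma sq_div_conv (a b u v w : ℝ) (hu : 0 < u) (hv : 0 < v) (hw : u + v ≤ w) :
    (a+b)^2 / w ≤ a^2/u + b^2/v := by
  have hw0 : 0 < w := by linarith
  calc (a+b)^2/w ≤ (a+b)^2/(u+v) := by
        apply div_le_div_of_nonneg_left (sq_nonneg _) (by linarith) hw
    _ ≤ _ := by
        rw [div_add_div _ _ hu.ne' hv.ne', div_le_div_iff₀ (by linarith) (by positivity)]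
        nlinarith [sq_nonneg (a*v - b*u), mul_pos hu hv]

lemma marcus_lopes {ι : Type*} [DecidableEq ι] (k : ℕ) (S : Finset ι) (x : ι → ℝ)
    (h : Gam (k+1) S x) :
    ((k:ℝ)+2) * (eS (k+2) S x / eS (k+1) S x) =
      ∑ i ∈ S, (x i - (x i)^2 / (x i + eS (k+1) (S.erase i) x / eS k (S.erase i) x)) := by
  have h1 := h (k+1) le_rfl
  have := eS_euler (k+1) S x
  push_cast at this
  have e : ((k:ℝ)+2) * (eS (k+2) S x / eS (k+1) S x) =
     ∑ i ∈ S, x i * eS (k+1) (S.erase i) x / eS (k+1) S x := by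
    rw [← Finset.sum_div, this]; ring
  rw [e]
  refine Finset.sum_congr rfl fun i hi => ?_
  have h0 := gam_erase k S x h i hi k le_rfl
  have hE := eS_erase k S x i hi
  have hh : x i + eS (k+1) (S.erase i) x / eS k (S.erase i) x =
      eS (k+1) S x / eS k (S.erase i) x := by
    rw [hE]; field_simp; ring
  rw [hh]
  field_simp
  rw [hE]; ring

lemma superadd {ι : Type*} [DecidableEq ι] (k : ℕ) : ∀ (S : Finset ι) (x y : ι → ℝ),
    Gam (k+1) S x → Gam (k+1) S y → Gam (k+1) S (x+y) ∧
      eS (k+1) S x / eS k S x + eS (k+1) S y / eS k S y ≤ eS (k+1) S (x+y) / eS k S (x+y) := by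
  induction k with
  | zero =>
    intro S x y hx hy
    have h : eS 1 S (x+y) = eS 1 S x + eS 1 S y := by
      simp [eS, Finset.powersetCard_one, Finset.sum_add_distrib]
    refine ⟨?_, ?_⟩
    · intro j hj
      rcases Nat.lt_or_ge j 1 with h0 | h0
      · obtain rfl : j = 0 := by omega
        rw [eS_zero]; norm_num
      · obtain rfl : j = 1 := by omega
        rw [h]; exact add_pos (hx 1 le_rfl) (hy 1 le_rfl)
    · simp [eS_zero, h]
  | succ k ih =>
    intro S x y hx hy
    have hx' : Gam (k+1) S x := fun j hj => hx j (by omega)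
    have hy' : Gam (k+1) S y := fun j hj => hy j (by omega)
    obtain ⟨hxy, -⟩ := ih S x y hx' hy'
    have main : eS (k+1+1) S x / eS (k+1) S x + eS (k+1+1) S y / eS (k+1) S y ≤
        eS (k+1+1) S (x+y) / eS (k+1) S (x+y) := by
      have hk : (0:ℝ) < (k:ℝ)+2 := by positivity
      refine le_of_mul_le_mul_left ?_ hk
      rw [mul_add, marcus_lopes k S x hx', marcus_lopes k S y hy', marcus_lopes k S _ hxy,
        ← Finset.sum_add_distrib]
      refine Finset.sum_le_sum fun i hi => ?_
      have hxi := gam_erase (k+1) S x hx i hi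
      have hyi := gam_erase (k+1) S y hy i hi
      have hq := (ih (S.erase i) x y hxi hyi).2
      have pos : ∀ z, Gam (k+1) S z → Gam k (S.erase i) z →
          0 < z i + eS (k+1) (S.erase i) z / eS k (S.erase i) z := by
        intro z hz hzi
        have h0 := hzi k le_rfl
        have h1 := hz (k+1) le_rfl
        rw [eS_erase k S z i hi] at h1
        have : z i + eS (k+1) (S.erase i) z / eS k (S.erase i) z =
          (eS (k+1) (S.erase i) z + z i * eS k (S.erase i) z) / eS k (S.erase i) z := by
          field_simp; ring
        rw [this]; exact div_pos h1 h0
      have := sq_div_conv (x i) (y i) _ _ ((x+y) i +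
        eS (k+1) (S.erase i) (x+y) / eS k (S.erase i) (x+y))
        (pos x hx' (gam_erase k S x hx' i hi)) (pos y hy' (gam_erase k S y hy' i hi))
        (by rw [Pi.add_apply]; linarith)
      rw [Pi.add_apply] at *
      linarith
    refine ⟨?_, main⟩
    intro j hj
    rcases Nat.lt_or_ge j (k+1+1) with h0 | h0
    · exact hxy j (by omega)
    · obtain rfl : j = k+1+1 := by omega
      have p1 := div_pos (hx (k+1+1) le_rfl) (hx (k+1) (by omega))
      have p2 := div_pos (hy (k+1+1) le_rfl) (hy (k+1) (by omega))
      have p3 := hxy (k+1) le_rfl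
      have p4 := lt_of_lt_of_le (add_pos p1 p2) main
      exact (div_pos_iff_of_pos_right p3).1 p4

lemma gam_add {ι : Type*} [DecidableEq ι] (k : ℕ) (S : Finset ι) (x y : ι → ℝ)
    (hx : Gam k S x) (hy : Gam k S y) : Gam k S (x+y) := by
  cases k with
  | zero => intro j hj; obtain rfl : j = 0 := by omega
            rw [eS_zero]; norm_num
  | succ k => exact (superadd k S x y hx hy).1

lemma logconc {ι : Type*} [DecidableEq ι] (k : ℕ) (S : Finset ι) (x y : ι → ℝ)
    (hx : Gam k S x) (hy : Gam k S y) :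
    4^k * (eS k S x * eS k S y) ≤ (eS k S (x+y))^2 := by
  induction k with
  | zero => simp [eS_zero]
  | succ k ih =>
    have hx' : Gam k S x := fun j hj => hx j (by omega)
    have hy' : Gam k S y := fun j hj => hy j (by omega)
    have h1 := ih hx' hy'
    have h2 := (superadd k S x y hx hy).2
    have p0 := hx' k le_rfl
    have p1 := hy' k le_rfl
    have p2 := gam_add k S x y hx' hy' k le_rfl
    have r0 := hx (k+1) le_rfl
    have r1 := hy (k+1) le_rfl
    set u := eS (k+1) S x / eS k S x with hu
    set v := eS (k+1) S y / eS k S y with hv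
    set w := eS (k+1) S (x+y) / eS k S (x+y) with hw
    have u0 : 0 < u := div_pos r0 p0
    have v0 : 0 < v := div_pos r1 p1
    have eu : eS (k+1) S x = u * eS k S x := by rw [hu]; field_simp
    have ev : eS (k+1) S y = v * eS k S y := by rw [hv]; field_simp
    have ew : eS (k+1) S (x+y) = w * eS k S (x+y) := by rw [hw]; field_simp
    rw [eu, ev, ew]
    have huv : 4 * (u * v) ≤ w^2 := by nlinarith [sq_nonneg (u - v)]
    calc 4^(k+1) * (u * eS k S x * (v * eS k S y))
        = (4 * (u*v)) * (4^k * (eS k S x * eS k S y)) := by ring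
      _ ≤ w^2 * (eS k S (x+y))^2 := by
          apply mul_le_mul huv h1 (by positivity) (sq_nonneg _)
      _ = _ := by ring

lemma pow_expand (c : ℝ) (k : ℕ) : ∃ R : ℝ → ℝ, Continuous R ∧ ∀ t : ℝ,
    (1 - c*t)^k = 1 - k*c*t + k*(k-1)/2*c^2*t^2 + t^3 * R t := by
  induction k with
  | zero => exact ⟨fun _ => 0, continuous_const, fun t => by simp⟩
  | succ k ih =>
    obtain ⟨R, hR, h⟩ := ih
    refine ⟨fun t => R t * (1 - c*t) - k*(k-1)/2*c^3, by fun_prop, fun t => ?_⟩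
    rw [pow_succ, h]
    push_cast
    ring

lemma abstract_ineq (k : ℕ) (D : ℕ → ℝ) (h0 : 0 < D 0)
    (h : ∀ c : ℝ, ∀ᶠ t in nhds (0:ℝ),
      (∑ m ∈ Finset.range (k+2+1), (1-c*t)^(k+2-m) * t^m * D m) *
      (∑ m ∈ Finset.range (k+2+1), (1-c*(-t))^(k+2-m) * (-t)^m * D m) ≤ (D 0)^2) :
    D 0 * (2 * D 2) ≤ (((k+2:ℕ):ℝ)-1)/((k+2:ℕ):ℝ) * (D 1)^2 := by
  have hk : (0:ℝ) < (k:ℝ)+2 := by positivity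
  set c : ℝ := D 1 / ((k+2) * D 0) with hc
  set Q : ℝ := D 2 - (k+1) * (D 1)^2 / (2*(k+2)*D 0) with hQ
  have hR : ∃ R : ℝ → ℝ, Continuous R ∧ ∀ t : ℝ,
      (∑ m ∈ Finset.range (k+2+1), (1-c*t)^(k+2-m) * t^m * D m) = D 0 + Q*t^2 + t^3 * R t := by
    obtain ⟨R0, c0, e0⟩ := pow_expand c (k+2)
    obtain ⟨R1, c1, e1⟩ := pow_expand c (k+1)
    obtain ⟨R2, c2, e2⟩ := pow_expand c k
    refine ⟨fun t => R0 t * D 0 + ((k+1)*k/2*c^2 + t*R1 t) * D 1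
      + (-k*c + k*(k-1)/2*c^2*t + t^2 * R2 t) * D 2
      + ∑ m ∈ Finset.range k, (1-c*t)^(k+2-(m+1+1+1)) * t^m * D (m+1+1+1), by fun_prop, ?_⟩
    intro t
    rw [Finset.sum_range_succ', Finset.sum_range_succ', Finset.sum_range_succ']
    have : ∑ m ∈ Finset.range k, (1-c*t)^(k+2-(m+1+1+1)) * t^(m+1+1+1) * D (m+1+1+1)
        = t^3 * ∑ m ∈ Finset.range k, (1-c*t)^(k+2-(m+1+1+1)) * t^m * D (m+1+1+1) := by
      rw [Finset.mul_sum]; refine Finset.sum_congr rfl fun m _ => by ring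
    rw [this]
    simp only [zero_add, Nat.sub_zero, show k+2-(1+1) = k by omega, show k+2-1 = k+1 by omega]
    rw [e0, e1, e2, hQ, hc]
    push_cast
    field_simp
    ring
  obtain ⟨R, hRc, hRe⟩ := hR
  have hW : ∀ᶠ t in nhdsWithin (0:ℝ) {0}ᶜ,
      2 * D 0 * Q + t * (D 0 * (R t - R (-t)) + t*Q^2 + t^2*Q*(R t - R (-t))
        - t^3 * R t * R (-t)) ≤ 0 := by
    have h' := (h c).filter_mono (nhdsWithin_le_nhds (s := {0}ᶜ))
    filter_upwards [h', self_mem_nhdsWithin] with t ht ht0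
    rw [hRe t, hRe (-t)] at ht
    have ht2 : 0 < t^2 := by
      have : t ≠ 0 := ht0
      positivity
    refine le_of_mul_le_mul_left ?_ ht2
    nlinarith
  have hlim : Filter.Tendsto (fun t : ℝ => 2 * D 0 * Q + t * (D 0 * (R t - R (-t)) + t*Q^2
      + t^2*Q*(R t - R (-t)) - t^3 * R t * R (-t))) (nhdsWithin (0:ℝ) {0}ᶜ)
      (nhds (2 * D 0 * Q)) := by
    have hcont : Continuous (fun t : ℝ => 2 * D 0 * Q + t * (D 0 * (R t - R (-t)) + t*Q^2
      + t^2*Q*(R t - R (-t)) - t^3 * R t * R (-t))) := by fun_prop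
    have := hcont.tendsto 0
    simp only [zero_mul, add_zero] at this
    exact this.mono_left nhdsWithin_le_nhds
  have := le_of_tendsto hlim hW
  have e : 2 * D 0 * Q = D 0 * (2 * D 2) - (((k+2:ℕ):ℝ)-1)/((k+2:ℕ):ℝ) * (D 1)^2 := by
    rw [hQ]; push_cast; field_simp; ring
  linarith

section PolyPart
open Polynomial

lemma det_diag_add {n : Type*} [Fintype n] [DecidableEq n] {R : Type*} [CommRing R]
    (d : n → R) (M : Matrix n n R) :
    (diagonal d + M).det = ∑ S : Finset n,
      (M.submatrix (Subtype.val : S → n) (Subtype.val : S → n)).det * ∏ i ∈ Sᶜ, d i := by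
  rw [add_comm]
  have h := (detRowAlternating (n := n) (R := R)).map_add_univ (fun i => M i)
    (fun i => (diagonal d : Matrix n n R) i)
  change (detRowAlternating (n := n) (R := R)) ((fun i => M i) + fun i => (diagonal d : Matrix n n R) i) = _
  rw [h]
  refine Finset.sum_congr rfl fun S _ => ?_
  rw [← det_piecewise_one_eq_submatrix_det]
  have h2 : S.piecewise (fun i => M i) (fun i => (diagonal d : Matrix n n R) i) =
      fun i => (if i ∈ S then 1 else d i) • (S.piecewise M.row (1 : Matrix n n R).row) i := by
    funext i j
    by_cases hi : i ∈ S
    · simp only [Finset.piecewise, hi, if_true, Pi.smul_apply, one_smul]; rfl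
    · simp only [Finset.piecewise, hi, if_false, Pi.smul_apply, smul_eq_mul]
      simp [Matrix.row, Matrix.diagonal_apply, Matrix.one_apply]
  rw [h2, AlternatingMap.map_smul_univ, smul_eq_mul, mul_comm]
  congr 1
  rw [Finset.prod_ite, Finset.prod_const_one, one_mul]
  congr 1
  ext i; simp

noncomputable def DD {n : ℕ} (k : ℕ) (l : Fin n → ℝ) (B : Matrix (Fin n) (Fin n) ℝ) (m : ℕ) : ℝ :=
  ∑ S ∈ Finset.univ.powersetCard m,
    (B.submatrix (Subtype.val : S → Fin n) (Subtype.val : S → Fin n)).det * eS (k-m) Sᶜ l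

lemma coeff_det_expand {n : ℕ} (k : ℕ) (hk : k ≤ n) (l : Fin n → ℝ)
    (B : Matrix (Fin n) (Fin n) ℝ) :
    (diagonal (fun i => X + C (l i)) + B.map C).det.coeff (n-k) =
      ∑ m ∈ Finset.range (k+1), DD k l B m := by
  rw [det_diag_add, finsetSum_coeff]
  have h1 : ∀ S : Finset (Fin n), (((B.map C).submatrix (Subtype.val : S → Fin n)
      (Subtype.val : S → Fin n)).det * ∏ i ∈ Sᶜ, (X + C (l i))).coeff (n-k) =
      if S.card ≤ k then (B.submatrix (Subtype.val : S → Fin n)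
        (Subtype.val : S → Fin n)).det * eS (k - S.card) Sᶜ l else 0 := by
    intro S
    have : ((B.map C).submatrix (Subtype.val : S → Fin n) (Subtype.val : S → Fin n)).det =
      C (B.submatrix (Subtype.val : S → Fin n) (Subtype.val : S → Fin n)).det := by
      rw [RingHom.map_det]; rfl
    rw [this, coeff_C_mul]
    have hc : Sᶜ.card = n - S.card := by simp [Finset.card_compl]
    have hS : S.card ≤ n := by simpa using Finset.card_le_univ S
    split_ifs with hle
    · rw [Finset.prod_X_add_C_coeff _ _ (by omega)]
      unfold eS
      rw [show Sᶜ.card - (n-k) = k - S.card by omega]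
    · rw [coeff_eq_zero_of_natDegree_lt, mul_zero]
      rw [natDegree_prod_of_monic _ _ (fun i _ => monic_X_add_C _)]
      simp only [natDegree_X_add_C, Finset.sum_const, smul_eq_mul, mul_one]
      omega
  rw [Finset.sum_congr rfl fun S _ => h1 S, ← Finset.sum_filter]
  have hmaps : ∀ S ∈ (Finset.univ : Finset (Finset (Fin n))).filter (fun S => S.card ≤ k),
      S.card ∈ Finset.range (k+1) := by
    intro S hS
    have := (Finset.mem_filter.1 hS).2
    rw [Finset.mem_range]; omega
  rw [← Finset.sum_fiberwise_of_maps_to hmaps]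
  refine Finset.sum_congr rfl fun m hm => ?_
  rw [Finset.mem_range] at hm
  unfold DD
  have : ((Finset.univ : Finset (Finset (Fin n))).filter (fun S => S.card ≤ k)).filter
      (fun S => S.card = m) = Finset.univ.powersetCard m := by
    ext S; simp [Finset.mem_powersetCard]; omega
  rw [this]
  refine Finset.sum_congr rfl fun S hS => ?_
  rw [(Finset.mem_powersetCard.1 hS).2]

lemma eS_smul {ι : Type*} (k : ℕ) (S : Finset ι) (x : ι → ℝ) (a : ℝ) :
    eS k S (a • x) = a^k * eS k S x := by
  unfold eS
  rw [Finset.mul_sum]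
  refine Finset.sum_congr rfl fun T hT => ?_
  simp [Finset.prod_mul_distrib, (Finset.mem_powersetCard.1 hT).2]

lemma DD_smul {n : ℕ} (k : ℕ) (l : Fin n → ℝ) (B : Matrix (Fin n) (Fin n) ℝ) (m : ℕ) (a t : ℝ) :
    DD k (a • l) (t • B) m = a^(k-m) * t^m * DD k l B m := by
  unfold DD
  rw [Finset.mul_sum]
  refine Finset.sum_congr rfl fun S hS => ?_
  rw [eS_smul, submatrix_smul, Pi.smul_apply, Pi.smul_apply, det_smul, Fintype.card_coe, (Finset.mem_powersetCard.1 hS).2]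
  ring

lemma eS_expand {n : ℕ} (k : ℕ) (hk : k ≤ n) (l b : Fin n → ℝ) (a t : ℝ) :
    eS k Finset.univ (a • l + t • b) =
      ∑ m ∈ Finset.range (k+1), a^(k-m) * t^m * DD k l (diagonal b) m := by
  simp_rw [← DD_smul]
  rw [← coeff_det_expand k hk]
  have : diagonal (fun i => X + C ((a • l) i)) + (t • diagonal b).map C =
      diagonal (fun i => X + C ((a • l + t • b) i)) := by
    ext1 i j
    by_cases h : i = j
    · subst h; simp [add_assoc]
    · simp [h]
  rw [this, det_diagonal, Finset.prod_X_add_C_coeff _ _ (by simp)]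
  unfold eS
  congr 2
  simp; omega

lemma sigmaEig_eq {n : ℕ} (k : ℕ) (hk : k ≤ n) (M : Matrix (Fin n) (Fin n) ℝ)
    (hM : M.IsHermitian) : sigmaEig hM k = (-M).charpoly.coeff (n-k) := by
  have h1 := charpoly_coeff_eq_sum_minors (-M) k (by simpa using hk)
  have h2 := charpoly_coeff_eq_sum_minors M k (by simpa using hk)
  rw [hM.charpoly_eq] at h2
  have h3 := Multiset.prod_X_sub_C_coeff (Finset.univ.val.map hM.eigenvalues)
    (k := n - k) (by simp)
  rw [Multiset.map_map] at h3
  simp only [Fintype.card_fin, Multiset.card_map, Finset.card_val, Finset.card_univ,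
    Nat.sub_sub_self hk] at h1 h2 h3
  change (∏ i, (X - C (hM.eigenvalues i))).coeff (n-k) = _ at h3
  have h4 : (-1:ℝ)^k * sigmaEig hM k = (-1)^k * ∑ s ∈ Finset.univ.powersetCard k,
      (M.submatrix (Subtype.val : s → Fin n) (Subtype.val : s → Fin n)).det := by
    rw [← h2]; exact h3.symm
  have h5 := mul_left_cancel₀ (pow_ne_zero k (by norm_num : (-1:ℝ) ≠ 0)) h4
  rw [h1, h5, Finset.mul_sum]
  refine Finset.sum_congr rfl fun s hs => ?_
  rw [submatrix_neg, Pi.neg_apply, Pi.neg_apply, det_neg, Fintype.card_coe, (Finset.mem_powersetCard.1 hs).2,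
    ← mul_assoc, ← mul_pow]
  simp

lemma sigmaEig_expand {n : ℕ} (k : ℕ) (hk : k ≤ n) (l : Fin n → ℝ)
    (U V A B : Matrix (Fin n) (Fin n) ℝ) (hUV : V * U = 1) (hUV' : U * V = 1)
    (hA : A = U * diagonal l * V) (t : ℝ)
    (hM : (A + t • B).IsHermitian) : sigmaEig hM k =
      ∑ m ∈ Finset.range (k+1), t^m * DD k l (V * B * U) m := by
  rw [sigmaEig_eq k hk]
  have e : -(A + t • B) = U * (-(diagonal l + t • (V * B * U)) * V) := by
    have : U * (V * B * U) * V = B := by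
      calc U * (V * B * U) * V = (U * V) * B * (U * V) := by simp only [Matrix.mul_assoc]
        _ = B := by simp [hUV']
    rw [← Matrix.mul_assoc, Matrix.mul_neg, Matrix.neg_mul, Matrix.mul_add, Matrix.add_mul, ← hA,
      Matrix.mul_smul, Matrix.smul_mul, this]
  rw [e, charpoly_mul_comm, Matrix.mul_assoc, hUV, Matrix.mul_one]
  have h := coeff_det_expand k hk l (t • (V * B * U))
  have h2 : ∀ m, DD k l (t • (V * B * U)) m = t^m * DD k l (V * B * U) m := by
    intro m
    simpa using DD_smul k l (V * B * U) m 1 t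
  simp_rw [h2] at h
  rw [← h, Matrix.charpoly]
  congr 2
  ext1 i j
  by_cases hij : i = j
  · subst hij; simp; ring
  · simp [hij]

lemma det_sub_pair {n : ℕ} (B : Matrix (Fin n) (Fin n) ℝ) (i j : Fin n) (hij : i ≠ j) :
    (B.submatrix (Subtype.val : ({i, j} : Finset (Fin n)) → Fin n)
      (Subtype.val : ({i, j} : Finset (Fin n)) → Fin n)).det = B i i * B j j - B i j * B j i := by
  let f : Fin 2 → ({i, j} : Finset (Fin n)) := ![⟨i, by simp⟩, ⟨j, by simp⟩]
  have hf : Function.Bijective f := by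
    constructor
    · intro a b hab
      fin_cases a <;> fin_cases b <;> simp_all [f]
    · rintro ⟨a, ha⟩
      rcases Finset.mem_insert.1 ha with rfl | ha'
      · exact ⟨0, rfl⟩
      · obtain rfl := Finset.mem_singleton.1 ha'
        exact ⟨1, rfl⟩
  rw [← det_submatrix_equiv_self (Equiv.ofBijective f hf), det_fin_two]
  simp [f]

lemma DD_one {n : ℕ} (k : ℕ) (l : Fin n → ℝ) (B : Matrix (Fin n) (Fin n) ℝ) :
    DD k l B 1 = DD k l (diagonal fun i => B i i) 1 := by
  unfold DD
  refine Finset.sum_congr rfl fun S hS => ?_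
  obtain ⟨i, rfl⟩ := Finset.card_eq_one.1 (Finset.mem_powersetCard.1 hS).2
  congr 1
  rw [det_unique, det_unique]
  simp

lemma DD_zero {n : ℕ} (k : ℕ) (l : Fin n → ℝ) (B : Matrix (Fin n) (Fin n) ℝ) :
    DD k l B 0 = eS k Finset.univ l := by
  simp [DD]

lemma DD_two {n : ℕ} (k : ℕ) (l : Fin n → ℝ) (B : Matrix (Fin n) (Fin n) ℝ)
    (hB : B.IsHermitian) (hpos : ∀ i j : Fin n, i ≠ j → 0 ≤ eS (k-2) {i, j}ᶜ l) :
    DD k l B 2 ≤ DD k l (diagonal fun i => B i i) 2 := by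
  unfold DD
  refine Finset.sum_le_sum fun S hS => ?_
  obtain ⟨i, j, hij, rfl⟩ := Finset.card_eq_two.1 (Finset.mem_powersetCard.1 hS).2
  refine mul_le_mul_of_nonneg_right ?_ (hpos i j hij)
  rw [det_sub_pair _ _ _ hij, det_sub_pair _ _ _ hij]
  have : B j i = B i j := by simpa using hB.apply i j
  rw [this]
  simp [hij]
  nlinarith [mul_self_nonneg (B i j)]

lemma deriv_data (k : ℕ) (D : ℕ → ℝ) (p : ℝ → ℝ)
    (hp : ∀ t, p t = ∑ m ∈ Finset.range (k+1), t^m * D m) :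
    p 0 = D 0 ∧ deriv p 0 = (if 1 ≤ k then D 1 else 0) ∧
      deriv (deriv p) 0 = (if 2 ≤ k then 2 * D 2 else 0) := by
  set P : ℝ[X] := ∑ m ∈ Finset.range (k+1), C (D m) * X^m with hP
  have e : p = fun t => P.eval t := by
    funext t
    rw [hp, hP, eval_finsetSum]
    refine Finset.sum_congr rfl fun m _ => ?_
    rw [eval_mul, eval_C, eval_pow, eval_X, mul_comm]
  have hc : ∀ m, P.coeff m = if m ≤ k then D m else 0 := by
    intro m
    rw [hP, finsetSum_coeff]
    simp [coeff_C_mul, coeff_X_pow]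
  have d1 : deriv p = fun t => (derivative P).eval t := by
    funext t; rw [e, Polynomial.deriv]
  have d2 : deriv (deriv p) 0 = (derivative (derivative P)).eval 0 := by
    rw [d1, Polynomial.deriv]
  refine ⟨?_, ?_, ?_⟩
  · rw [e]; simp only [← coeff_zero_eq_eval_zero, hc]; simp
  · rw [d1]; simp only [← coeff_zero_eq_eval_zero, coeff_derivative, hc]; simp
  · rw [d2]; simp only [← coeff_zero_eq_eval_zero, coeff_derivative, hc]
    split_ifs <;> simp_all; ring

end PolyPart

/-- Concavity of `σ_k^{1/k}` on the Gårding cone `Γ_k⁺`, in the polynomial form: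
if `σ_j(A) > 0` for `1 ≤ j ≤ k` and `p(t) = σ_k(A + t B)`, then
`p(0) p''(0) ≤ ((k-1)/k) p'(0)²`. -/
theorem sigma_k_second_derivative_inequality
    {n k : ℕ} (hn : 1 ≤ n) (hk1 : 1 ≤ k) (hkn : k ≤ n)
    (A B : Matrix (Fin n) (Fin n) ℝ)
    (hA : A.IsHermitian) (hB : B.IsHermitian)
    (hGamma : ∀ j : ℕ, 1 ≤ j → j ≤ k → 0 < sigmaEig hA j)
    (p : ℝ → ℝ)
    (hp : ∀ t : ℝ, p t = sigmaEig (hA.add (isHermitian_smul_real hB t)) k) :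
    p 0 * deriv (deriv p) 0 ≤ ((k : ℝ) - 1) / k * (deriv p 0) ^ 2 := by
  have key : ∀ j, j ≤ k → sigmaEig hA j = eS j Finset.univ hA.eigenvalues := by
    intro j _
    unfold sigmaEig eS
    rw [Finset.esymm_map_val]
  set l := hA.eigenvalues with hl
  have hG : Gam k Finset.univ l := by
    intro j hj
    rcases Nat.eq_zero_or_pos j with rfl | h0
    · rw [eS_zero]; norm_num
    · rw [← key j hj]; exact hGamma j h0 hj
  set U : Matrix (Fin n) (Fin n) ℝ := (hA.eigenvectorUnitary : Matrix (Fin n) (Fin n) ℝ) with hU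
  set V : Matrix (Fin n) (Fin n) ℝ := star U with hV
  have hVU : V * U = 1 := Unitary.coe_star_mul_self hA.eigenvectorUnitary
  have hUV : U * V = 1 := Unitary.coe_mul_star_self hA.eigenvectorUnitary
  have hAd : A = U * diagonal l * V := by
    have := hA.spectral_theorem
    rw [Unitary.conjStarAlgAut_apply] at this
    exact this
  set B' := V * B * U with hB'
  have hBh : B'.IsHermitian := by
    rw [hB', hV, Matrix.star_eq_conjTranspose]
    exact Matrix.isHermitian_conjTranspose_mul_mul U hB
  have hpe : ∀ t, p t = ∑ m ∈ Finset.range (k+1), t^m * DD k l B' m := fun t => by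
    rw [hp t]
    exact sigmaEig_expand k hkn l U V A B hVU hUV hAd t _
  obtain ⟨e0, e1, e2⟩ := deriv_data k _ p hpe
  rw [e0, e1, e2, if_pos hk1]
  obtain rfl | hk2 : k = 1 ∨ 2 ≤ k := by omega
  · simp
  rw [if_pos hk2]
  obtain ⟨r, rfl⟩ : ∃ r, k = r + 2 := ⟨k-2, by omega⟩
  set b : Fin n → ℝ := fun i => B' i i with hb
  have hD0 : 0 < eS (r+2) Finset.univ l := hG _ le_rfl
  have hD2 := DD_two (r+2) l B' hBh (by
    intro i j hij
    have h1 := gam_erase (r+1) _ l hG i (Finset.mem_univ i)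
    have h2 := gam_erase r _ l h1 j (by simp [hij.symm])
    have h3 := h2 r le_rfl
    have hs : ({i, j} : Finset (Fin n))ᶜ = (Finset.univ.erase i).erase j := by
      ext a; simp; tauto
    rw [hs]
    exact h3.le)
  have main := abstract_ineq r (DD (r+2) l (diagonal b)) (by rw [DD_zero]; exact hD0) (by
    intro c
    have hev : ∀ s : ℝ, ∀ᶠ t in nhds (0:ℝ), Gam (r+2) Finset.univ ((1 - c*(s*t)) • l + (s*t) • b) := by
      intro s
      have : ∀ j ∈ Finset.range (r+3), ∀ᶠ t in nhds (0:ℝ),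
          0 < eS j Finset.univ ((1 - c*(s*t)) • l + (s*t) • b) := by
        intro j hj
        have hc : Continuous fun t : ℝ => eS j Finset.univ ((1 - c*(s*t)) • l + (s*t) • b) := by
          unfold eS
          simp only [Pi.add_apply, Pi.smul_apply, smul_eq_mul]
          fun_prop
        refine hc.continuousAt.eventually (lt_mem_nhds ?_)
        simp only [mul_zero, sub_zero, one_smul, zero_smul, add_zero]
        exact hG j (by rw [Finset.mem_range] at hj; omega)
      have := (Filter.eventually_all_finset (Finset.range (r+3))).2 this
      filter_upwards [this] with t ht j hj
      exact ht j (by rw [Finset.mem_range]; omega)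
    filter_upwards [hev 1, hev (-1)] with t h1 h2
    rw [← eS_expand _ hkn, ← eS_expand _ hkn, DD_zero]
    simp only [one_mul, neg_one_mul] at h1 h2
    have := logconc _ _ _ _ h1 h2
    have hs : ((1 - c*t) • l + t • b) + ((1 - c*(-t)) • l + (-t) • b) = (2:ℝ) • l := by
      ext i; simp; ring
    rw [hs, eS_smul, mul_pow, ← pow_mul, mul_comm (r+2) 2, pow_mul] at this
    have h4 : ((2:ℝ)^2)^(r+2) = 4^(r+2) := by norm_num
    rw [h4] at this
    exact le_of_mul_le_mul_left this (by positivity))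
  rw [DD_one, DD_zero]
  rw [DD_zero] at main
  refine le_trans ?_ main
  exact mul_le_mul_of_nonneg_left (by linarith) hD0.le
end

section
/- Let n ≥ 1 and let A be an n×n real symmetric matrix with tr A > 0 and σ₂(A) > 0, where σ₂(M) := ((tr M)² − tr(M²))/2. Then for every n×n real symmetric matrix B one has 4·σ₂(A)·σ₂(B) ≤ (tr A · tr B − tr(A·B))². -/
open Matrix

/-- The second elementary symmetric polynomial of the eigenvalues of a matrix,
expressed as `((tr M)² − tr(M²))/2`. -/
noncomputable def sigma2 {n : ℕ} (M : Matrix (Fin n) (Fin n) ℝ) : ℝ :=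
  ((M.trace) ^ 2 - (M * M).trace) / 2

/-- Reverse Cauchy–Schwarz inequality for the hyperbolic quadratic form `σ₂`
(Gårding's inequality in the case `k = 2`): if `A` is symmetric with `tr A > 0`
and `σ₂(A) > 0`, then for every symmetric `B`,
`4 σ₂(A) σ₂(B) ≤ (tr A · tr B − tr(AB))²`. -/
theorem sigma2_reverse_cauchy_schwarz
    {n : ℕ} (hn : 1 ≤ n) (A : Matrix (Fin n) (Fin n) ℝ) (hA : A.IsHermitian)
    (htr : 0 < A.trace) (hs2 : 0 < sigma2 A)
    (B : Matrix (Fin n) (Fin n) ℝ) (hB : B.IsHermitian) :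
    4 * sigma2 A * sigma2 B ≤ (A.trace * B.trace - (A * B).trace) ^ 2 := by
  have hC : 0 ≤ ((A.trace • B - B.trace • A) * (A.trace • B - B.trace • A)).trace := by
    have hs : (A.trace • B - B.trace • A)ᵀ = A.trace • B - B.trace • A := by
      have h1 : Aᵀ = A := by simpa [Matrix.IsHermitian] using hA
      have h2 : Bᵀ = B := by simpa [Matrix.IsHermitian] using hB
      rw [transpose_sub, transpose_smul, transpose_smul, h1, h2]
    generalize A.trace • B - B.trace • A = C at hs
    nth_rewrite 1 [← hs]
    simp only [Matrix.trace, Matrix.diag, Matrix.mul_apply, Matrix.transpose_apply]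
    exact Finset.sum_nonneg fun i _ => Finset.sum_nonneg fun j _ => mul_self_nonneg _
  have hBA : (B * A).trace = (A * B).trace := Matrix.trace_mul_comm B A
  simp only [Matrix.sub_mul, Matrix.mul_sub, Matrix.smul_mul, Matrix.mul_smul,
    Matrix.trace_sub, Matrix.trace_smul, smul_eq_mul, hBA] at hC
  unfold sigma2 at *
  generalize A.trace = a at *
  generalize B.trace = b at *
  generalize (A * A).trace = p at *
  generalize (B * B).trace = q at *
  generalize (A * B).trace = r at *
  have hp : 0 < a ^ 2 - p := by linarith
  have h1 := mul_nonneg hp.le hC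
  have h2 : 0 ≤ a ^ 2 * ((a * b - r) ^ 2 - 4 * ((a ^ 2 - p) / 2) * ((b ^ 2 - q) / 2)) := by
    nlinarith [sq_nonneg (a * r - b * p)]
  have h3 := nonneg_of_mul_nonneg_right h2 (by positivity)
  linarith
end

section
/- Let A be a 4×4 real symmetric matrix with tr A > 0 and σ₂(A) > 0, where σ₂(A) := ((tr A)² − tr(A²))/2. Then the matrix 2A + (tr A)·I is positive definite. -/
open Matrix

theorem trace_sq_aux (B : Matrix (Fin 4) (Fin 4) ℝ) (hB : B.IsHermitian) :
    (B * B).trace = ∑ i, hB.eigenvalues i ^ 2 := by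
  conv_lhs => rw [hB.spectral_theorem, ← map_mul]
  rw [Unitary.conjStarAlgAut_apply, trace_mul_cycle, Unitary.coe_star_mul_self, one_mul,
    diagonal_mul_diagonal, trace_diagonal]
  simp [pow_two]

/-- If a `4×4` real symmetric matrix `A` satisfies `tr A > 0` and `σ₂(A) > 0`
(i.e. `A` lies in the cone `Γ₂⁺`), then `2A + (tr A)·I` is positive definite.
(If `A` is the Schouten tensor of a metric in dimension 4, `2A + (tr A)·I` is
the Ricci tensor.) -/
theorem ricci_posDef_of_gamma2
    (A : Matrix (Fin 4) (Fin 4) ℝ) (hA : A.IsHermitian)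
    (htr : 0 < A.trace) (hs2 : 0 < sigma2 A) :
    ((2 : ℝ) • A + A.trace • (1 : Matrix (Fin 4) (Fin 4) ℝ)).PosDef := by
  have hB : ((2 : ℝ) • A + A.trace • (1 : Matrix (Fin 4) (Fin 4) ℝ)).IsHermitian := by
    unfold Matrix.IsHermitian at *
    simpa using hA
  have h1 := hB.trace_eq_sum_eigenvalues
  have h2 := trace_sq_aux _ hB
  rw [hB.posDef_iff_eigenvalues_pos]
  generalize hB.eigenvalues = m at *
  have h3 : 6 * A.trace = ∑ i, m i := by
    simp only [RCLike.ofReal_real_eq_id, id] at h1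
    rw [← h1]
    simp [trace_add, trace_smul]
    ring
  have h4 : 4 * (A * A).trace + 8 * A.trace ^ 2 = ∑ i, m i ^ 2 := by
    rw [← h2]
    simp [add_mul, mul_add, trace_add, trace_smul]
    ring
  unfold sigma2 at hs2
  generalize A.trace = T at *
  generalize (A * A).trace = S at *
  rw [Fin.sum_univ_four] at h3 h4
  have key : ∀ a b c d : ℝ, 6 * T = a + b + c + d →
      4 * S + 8 * T ^ 2 = a ^ 2 + b ^ 2 + c ^ 2 + d ^ 2 → 0 < a := by
    intro a b c d h5 h6
    by_contra! h
    have h7 : (6 * T) ^ 2 ≤ (b + c + d) ^ 2 := pow_le_pow_left₀ (by linarith) (by linarith) 2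
    nlinarith [sq_nonneg (b - c), sq_nonneg (c - d), sq_nonneg (b - d), sq_nonneg a]
  intro i
  fin_cases i
  · exact key (m 0) (m 1) (m 2) (m 3) (by linarith) (by linarith)
  · exact key (m 1) (m 0) (m 2) (m 3) (by linarith) (by linarith)
  · exact key (m 2) (m 1) (m 0) (m 3) (by linarith) (by linarith)
  · exact key (m 3) (m 1) (m 2) (m 0) (by linarith) (by linarith)
end

section
/- Let n ≥ 1 and let A be an n×n real symmetric matrix with tr A > 0 and σ₂(A) > 0, where σ₂(A) := ((tr A)² − tr(A²))/2. Then every eigenvalue λ of A satisfies |λ| < tr A; consequently both (tr A)·I − A and (tr A)·I + A are positive definite. -/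
open Matrix

/-- If `A` is an `n×n` real symmetric matrix with `tr A > 0` and `σ₂(A) > 0`,
then every eigenvalue `λ` of `A` satisfies `|λ| < tr A`; consequently both
`(tr A)·I − A` and `(tr A)·I + A` are positive definite. This expresses the
ellipticity of the `σ₂`-equation at admissible solutions. -/
theorem newton_tensor_posDef_of_gamma2
    {n : ℕ} (hn : 1 ≤ n) (A : Matrix (Fin n) (Fin n) ℝ) (hA : A.IsHermitian)
    (htr : 0 < A.trace) (hs2 : 0 < sigma2 A) :
    (∀ i : Fin n, |hA.eigenvalues i| < A.trace) ∧
      (A.trace • (1 : Matrix (Fin n) (Fin n) ℝ) - A).PosDef ∧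
      (A.trace • (1 : Matrix (Fin n) (Fin n) ℝ) + A).PosDef := by
  obtain ⟨U, hU1, hU2, hspec⟩ : ∃ U : Matrix (Fin n) (Fin n) ℝ, star U * U = 1 ∧ U * star U = 1 ∧
      A = U * diagonal hA.eigenvalues * star U := by
    refine ⟨hA.eigenvectorUnitary, ?_, ?_, ?_⟩
    · simp
    · simp
    · have h := hA.spectral_theorem
      rw [Unitary.conjStarAlgAut_apply] at h
      exact h
  have htrA : (A * A).trace = ∑ i, hA.eigenvalues i ^ 2 := by
    have h : A * A = U * (diagonal hA.eigenvalues * diagonal hA.eigenvalues) * star U := by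
      calc A * A = (U * diagonal hA.eigenvalues * star U) * (U * diagonal hA.eigenvalues * star U) :=
            congrArg₂ (· * ·) hspec hspec
        _ = U * diagonal hA.eigenvalues * (star U * U) * diagonal hA.eigenvalues * star U := by
            simp only [Matrix.mul_assoc]
        _ = _ := by rw [hU1]; simp only [Matrix.mul_assoc, Matrix.one_mul]
    rw [h, Matrix.trace_mul_comm, ← Matrix.mul_assoc, hU1, Matrix.one_mul, diagonal_mul_diagonal,
      trace_diagonal]
    simp only [pow_two]
  have hev : ∀ i : Fin n, |hA.eigenvalues i| < A.trace := by
    intro i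
    apply abs_lt_of_sq_lt_sq _ htr.le
    have h1 : hA.eigenvalues i ^ 2 ≤ ∑ i, hA.eigenvalues i ^ 2 :=
      Finset.single_le_sum (f := fun i => hA.eigenvalues i ^ 2)
        (fun j _ => sq_nonneg _) (Finset.mem_univ i)
    unfold sigma2 at hs2
    linarith
  have hUu : IsUnit U := ⟨⟨U, star U, hU2, hU1⟩, rfl⟩
  have h1 : A.trace • (1 : Matrix (Fin n) (Fin n) ℝ)
      = U * diagonal (fun _ => A.trace) * star U := by
    rw [← smul_one_eq_diagonal, Matrix.mul_smul, Matrix.smul_mul, Matrix.mul_one, hU2]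
  refine ⟨hev, ?_, ?_⟩
  · have h : A.trace • (1 : Matrix (Fin n) (Fin n) ℝ) - A
        = U * diagonal (fun i => A.trace - hA.eigenvalues i) * star U := by
      rw [← diagonal_sub, Matrix.mul_sub, Matrix.sub_mul, ← h1, ← hspec]
    rw [h, IsUnit.posDef_star_right_conjugate_iff hUu, posDef_diagonal_iff]
    intro i
    linarith [(abs_lt.1 (hev i)).2]
  · have h : A.trace • (1 : Matrix (Fin n) (Fin n) ℝ) + A
        = U * diagonal (fun i => A.trace + hA.eigenvalues i) * star U := by
      rw [← diagonal_add, Matrix.mul_add, Matrix.add_mul, ← h1, ← hspec]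
    rw [h, IsUnit.posDef_star_right_conjugate_iff hUu, posDef_diagonal_iff]
    intro i
    linarith [(abs_lt.1 (hev i)).1]
end

section
/- Let (v_j) be a sequence of measurable functions from ℝ⁴ to ℝ such that for some constant C one has |v_j(z)| ≤ C for all j and all z, and such that for some constant L and every δ > 0, v_j converges to L uniformly on {z ∈ ℝ⁴ : ‖z‖ ≥ δ}. Let (t_j) be a sequence of positive reals with t_j → ∞, let M > 0, and let h ∈ {1,2,3,4}. Then t_j · ∫_{‖z‖ > M/t_j} (2 t_j z_h/(1 + t_j² ‖z‖²)) · e^{4 v_j(z)} · (2/(1+‖z‖²))⁴ dz → 0 as j → ∞. -/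
open MeasureTheory Filter

lemma aux_integrable : Integrable (fun z : EuclideanSpace ℝ (Fin 4) =>
    (fun r : ℝ => r⁻¹ * ((1 + r ^ 2) ^ 4)⁻¹) ‖z‖) := by
  rw [integrable_fun_norm_addHaar (μ := (volume : Measure (EuclideanSpace ℝ (Fin 4))))
    (f := fun r : ℝ => r⁻¹ * ((1 + r ^ 2) ^ 4)⁻¹)]
  refine Integrable.mono' (integrable_inv_one_add_sq.integrableOn) ?_ ?_
  · exact Measurable.aestronglyMeasurable (by fun_prop)
  · refine (ae_restrict_mem measurableSet_Ioi).mono fun r hr => ?_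
    have hr : 0 < r := hr
    simp only [finrank_euclideanSpace, Fintype.card_fin, smul_eq_mul]
    rw [Real.norm_of_nonneg (by positivity)]
    have : r ^ (4 - 1) * (r⁻¹ * ((1 + r ^ 2) ^ 4)⁻¹) = r ^ 2 / (1 + r ^ 2) ^ 4 := by
      norm_num
      field_simp
    rw [this, inv_eq_one_div, div_le_div_iff₀ (by positivity) (by positivity)]
    have h2 : 0 ≤ r ^ 2 := by positivity
    generalize r ^ 2 = x at h2
    have : x ≤ (1 + x) ^ 3 := by nlinarith [pow_nonneg h2 3, pow_nonneg h2 2]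
    nlinarith

/-- Estimate (e2): if `v_j` is uniformly bounded and converges to a constant `L`
uniformly away from the origin, and `t_j → ∞`, then for every coordinate `h`,
`t_j ∫_{‖z‖ > M/t_j} (2 t_j z_h/(1+t_j²‖z‖²)) e^{4 v_j} (2/(1+‖z‖²))⁴ dz → 0`. -/
theorem blowup_first_moment_limit
    (v : ℕ → EuclideanSpace ℝ (Fin 4) → ℝ) (C : ℝ)
    (hmeas : ∀ j, Measurable (v j))
    (hbd : ∀ j z, |v j z| ≤ C)
    (L : ℝ)
    (hconv : ∀ δ : ℝ, 0 < δ →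
      TendstoUniformlyOn (fun j z => v j z) (fun _ => L) atTop
        {z : EuclideanSpace ℝ (Fin 4) | δ ≤ ‖z‖})
    (t : ℕ → ℝ) (ht : ∀ j, 0 < t j) (htop : Tendsto t atTop atTop)
    (M : ℝ) (hM : 0 < M) (h : Fin 4) :
    Tendsto
      (fun j => t j * ∫ z in {z : EuclideanSpace ℝ (Fin 4) | M / t j < ‖z‖},
        (2 * t j * z h / (1 + (t j) ^ 2 * ‖z‖ ^ 2)) *
          Real.exp (4 * v j z) * (2 / (1 + ‖z‖ ^ 2)) ^ 4)
      atTop (nhds 0) := by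
  have hC : ∀ j z, Real.exp (4 * v j z) ≤ Real.exp (4 * C) := fun j z =>
    Real.exp_le_exp.2 (by linarith [le_abs_self (v j z), hbd j z])
  let g : EuclideanSpace ℝ (Fin 4) → ℝ := fun z =>
    (2 * z h / ‖z‖ ^ 2) * Real.exp (4 * L) * (2 / (1 + ‖z‖ ^ 2)) ^ 4
  have hg0 : ∫ z, g z = 0 := by
    have h1 := integral_neg_eq_self g volume
    have h2 : ∀ z, g (-z) = - g z := by
      intro z
      simp only [g, norm_neg, PiLp.neg_apply]
      ring
    simp only [h2, integral_neg] at h1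
    linarith
  have hS : ∀ j, MeasurableSet {z : EuclideanSpace ℝ (Fin 4) | M / t j < ‖z‖} := fun j =>
    measurableSet_lt measurable_const measurable_norm
  rw [← hg0]
  simp_rw [← integral_const_mul, ← integral_indicator (hS _)]
  refine tendsto_integral_of_dominated_convergence
    (fun z => (32 * Real.exp (4 * C)) * (‖z‖⁻¹ * ((1 + ‖z‖ ^ 2) ^ 4)⁻¹)) ?_ ?_ ?_ ?_
  · intro j
    refine (Measurable.indicator ?_ (hS j)).aestronglyMeasurable
    have := hmeas j
    fun_prop
  · exact aux_integrable.const_mul _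
  · intro j
    refine Eventually.of_forall fun z => ?_
    refine (norm_indicator_le_norm_self _ _).trans ?_
    have hz : |z h| ≤ ‖z‖ := PiLp.norm_apply_le z h
    have htj := ht j
    have key : t j * |2 * t j * z h / (1 + t j ^ 2 * ‖z‖ ^ 2)| ≤ 2 * ‖z‖⁻¹ := by
      rw [abs_div, abs_mul, abs_of_pos (by positivity : 0 < 2 * t j),
        abs_of_pos (by positivity : 0 < 1 + t j ^ 2 * ‖z‖ ^ 2)]
      rcases (norm_nonneg z).eq_or_lt with h0 | h0
      · rw [← h0] at hz ⊢
        have : |z h| = 0 := le_antisymm hz (abs_nonneg _)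
        simp [this]
      · rw [← div_eq_mul_inv, ← mul_div_assoc, div_le_div_iff₀ (by positivity) h0]
        have : t j ^ 2 * ‖z‖ * |z h| ≤ t j ^ 2 * ‖z‖ * ‖z‖ := by gcongr
        nlinarith
    rw [Real.norm_eq_abs, abs_mul, abs_mul, abs_mul, abs_of_pos htj, Real.abs_exp,
      abs_of_nonneg (by positivity : 0 ≤ (2 / (1 + ‖z‖ ^ 2)) ^ 4)]
    calc _ = (t j * |2 * t j * z h / (1 + t j ^ 2 * ‖z‖ ^ 2)|) * Real.exp (4 * v j z) *
          (2 / (1 + ‖z‖ ^ 2)) ^ 4 := by ring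
      _ ≤ (2 * ‖z‖⁻¹) * Real.exp (4 * C) * (2 / (1 + ‖z‖ ^ 2)) ^ 4 := by
          gcongr
          exact (le_abs_self _).trans (hbd j z)
      _ = _ := by
          rw [div_pow]
          ring
  · refine Eventually.of_forall fun z => ?_
    rcases eq_or_ne z 0 with rfl | hz0
    · simp [g, Set.indicator]
    have hr : 0 < ‖z‖ := norm_pos_iff.2 hz0
    have hv : Tendsto (fun j => v j z) atTop (nhds L) :=
      (hconv ‖z‖ hr).tendsto_at (x := z) (le_refl ‖z‖)
    have hinv : Tendsto (fun j => (t j)⁻¹) atTop (nhds 0) := tendsto_inv_atTop_zero.comp htop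
    have hev : ∀ᶠ j in atTop, M / t j < ‖z‖ := by
      have : Tendsto (fun j => M / t j) atTop (nhds 0) := by
        simpa [div_eq_mul_inv] using hinv.const_mul M
      exact this.eventually_lt_const hr
    have hfrac : Tendsto (fun j => 2 * z h / ((t j)⁻¹ ^ 2 + ‖z‖ ^ 2)) atTop
        (nhds (2 * z h / ‖z‖ ^ 2)) := by
      refine Tendsto.div tendsto_const_nhds ?_ (by positivity)
      simpa using (hinv.pow 2).add_const (‖z‖ ^ 2)
    have hexp : Tendsto (fun j => Real.exp (4 * v j z)) atTop (nhds (Real.exp (4 * L))) :=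
      (Real.continuous_exp.tendsto _).comp (hv.const_mul 4)
    refine ((hfrac.mul hexp).mul_const ((2 / (1 + ‖z‖ ^ 2)) ^ 4)).congr' ?_
    filter_upwards [hev] with j hj
    rw [Set.indicator_of_mem (by exact hj)]
    have htj := ht j
    have : 2 * z h / ((t j)⁻¹ ^ 2 + ‖z‖ ^ 2)
        = t j * (2 * t j * z h / (1 + t j ^ 2 * ‖z‖ ^ 2)) := by
      field_simp
    rw [this]
    ring
end

section
/- For every M > 0 and every i ∈ {1,2,3,4}, the limit as t → ∞ of t² · ∫_{‖z‖ > M/t} (2 t z_i/(1 + t² ‖z‖²))² · ((t² ‖z‖² − 1)/(t² ‖z‖² + 1)) · (2/(1+‖z‖²))⁴ dz equals 16π²/3 (which equals the volume of the unit 3-sphere, 2π², times ∫₀^∞ 16 r/(1+r²)⁴ dr = 8/3). -/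
open MeasureTheory Filter Real

lemma sma_deriv (y : ℝ) : HasDerivAt (fun y : ℝ => -(32/3) * ((1 + y^2)^3)⁻¹)
    (64 * y / (1 + y^2)^4) y := by
  have h0 : (1 + y^2) ≠ 0 := by positivity
  have h1 : HasDerivAt (fun y : ℝ => 1 + y^2) (2 * y) y := by
    simpa using (hasDerivAt_pow 2 y).const_add 1
  have h2 := ((h1.pow 3).inv (pow_ne_zero 3 h0)).const_mul (-(32/3) : ℝ)
  refine h2.congr_deriv ?_
  simp only [Pi.pow_apply]
  field_simp
  norm_num
  ring

lemma sma_lim : Tendsto (fun y : ℝ => -(32/3) * ((1 + y^2)^3)⁻¹) atTop (nhds 0) := by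
  have h : Tendsto (fun y : ℝ => (1 + y^2)^3) atTop atTop :=
    (tendsto_pow_atTop (by norm_num)).comp
      (tendsto_atTop_add_const_left _ _ (tendsto_pow_atTop (by norm_num)))
  simpa using h.inv_tendsto_atTop.const_mul (-(32/3) : ℝ)

lemma sma_pos (y : ℝ) (hy : y ∈ Set.Ioi (0:ℝ)) : 0 ≤ 64 * y / (1 + y^2)^4 := by
  have : 0 < y := hy
  positivity

noncomputable def smaF (r : ℝ) : ℝ := 64 / (r^2 * (1 + r^2)^4)

lemma smaF_nonneg (r : ℝ) : 0 ≤ smaF r := by unfold smaF; positivity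

lemma sma_smul (y : ℝ) (hy : y ∈ Set.Ioi (0:ℝ)) : y^3 • smaF y = 64 * y / (1 + y^2)^4 := by
  have : 0 < y := hy
  unfold smaF
  simp only [smul_eq_mul]
  field_simp

lemma sma_integrable :
    Integrable (fun z : EuclideanSpace ℝ (Fin 4) => smaF ‖z‖) := by
  rw [integrable_fun_norm_addHaar volume (f := smaF)]
  simp only [finrank_euclideanSpace, Fintype.card_fin]
  rw [integrableOn_congr_fun sma_smul measurableSet_Ioi]
  exact integrableOn_Ioi_deriv_of_nonneg' (fun x _ => sma_deriv x) sma_pos sma_lim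

lemma sma_integral :
    ∫ z : EuclideanSpace ℝ (Fin 4), smaF ‖z‖ = 64 * π^2 / 3 := by
  rw [integral_fun_norm_addHaar volume smaF]
  simp only [finrank_euclideanSpace, Fintype.card_fin]
  have h : ∫ y in Set.Ioi (0:ℝ), y ^ (4-1) • smaF y = 32/3 := by
    rw [setIntegral_congr_fun measurableSet_Ioi sma_smul,
      integral_Ioi_of_hasDerivAt_of_nonneg' (fun x _ => sma_deriv x) sma_pos sma_lim]
    norm_num
  rw [h, Measure.real, InnerProductSpace.volume_ball_of_dim_even (k := 2) (by simp)]
  simp only [ENNReal.ofReal_one, one_pow, one_mul]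
  rw [ENNReal.toReal_ofReal (by positivity)]
  simp [Nat.factorial]
  ring

noncomputable def smaG (i : Fin 4) (z : EuclideanSpace ℝ (Fin 4)) : ℝ :=
  (z i)^2 / ‖z‖^2 * smaF ‖z‖

lemma sma_ratio (i : Fin 4) (z : EuclideanSpace ℝ (Fin 4)) : (z i)^2 ≤ ‖z‖^2 := by
  have := PiLp.norm_apply_le z i
  rw [← sq_abs (z i)]
  exact pow_le_pow_left₀ (abs_nonneg _) this 2

lemma smaG_meas (i : Fin 4) : Measurable (smaG i) := by
  unfold smaG smaF
  fun_prop

lemma smaG_integrable (i : Fin 4) : Integrable (smaG i) := by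
  refine sma_integrable.mono' (smaG_meas i).aestronglyMeasurable (Eventually.of_forall fun z => ?_)
  have h0 := smaF_nonneg ‖z‖
  have h1 : (z i)^2 / ‖z‖^2 ≤ 1 := div_le_one_of_le₀ (sma_ratio i z) (by positivity)
  unfold smaG
  rw [Real.norm_of_nonneg (by positivity)]
  exact mul_le_of_le_one_left h0 h1

lemma smaG_symm (i j : Fin 4) : ∫ z, smaG i z = ∫ z, smaG j z := by
  let e := LinearIsometryEquiv.piLpCongrLeft 2 ℝ ℝ (Equiv.swap i j)
  have h := e.measurePreserving.integral_comp e.toHomeomorph.measurableEmbedding (smaG i)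
  rw [← h]
  congr 1
  ext z
  have : (e z) i = z j := by
    simp [e, LinearIsometryEquiv.piLpCongrLeft_apply, Equiv.piCongrLeft']
  simp [smaG, this]

lemma smaG_integral (i : Fin 4) : ∫ z, smaG i z = 16 * π^2 / 3 := by
  have h : ∑ j : Fin 4, ∫ z, smaG j z = 64 * π^2 / 3 := by
    rw [← integral_finsetSum _ (fun j _ => smaG_integrable j), ← sma_integral]
    congr 1
    ext z
    by_cases hz : z = 0
    · simp [hz, smaG, smaF]
    have h1 : ‖z‖ ^ 2 ≠ 0 := by simpa using hz
    simp only [smaG]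
    rw [← Finset.sum_mul, ← Finset.sum_div, ← EuclideanSpace.real_norm_sq_eq, div_self h1, one_mul]
  rw [Finset.sum_congr rfl (fun j _ => smaG_symm j i)] at h
  simp at h
  linarith

lemma sma_bound (t r a : ℝ) (hr : 0 < r) (ha : a^2 ≤ r^2) :
    |t^2 * ((2 * t * a / (1 + t ^ 2 * r ^ 2)) ^ 2 *
          ((t ^ 2 * r ^ 2 - 1) / (t ^ 2 * r ^ 2 + 1)) *
          (2 / (1 + r ^ 2)) ^ 4)| ≤ smaF r := by
  have h1 : |(t ^ 2 * r ^ 2 - 1) / (t ^ 2 * r ^ 2 + 1)| ≤ 1 := by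
    rw [abs_div, abs_of_pos (by positivity : 0 < t ^ 2 * r ^ 2 + 1)]
    refine div_le_one_of_le₀ (abs_le.2 ⟨?_, ?_⟩) (by positivity) <;> nlinarith [sq_nonneg (t*r)]
  have h2 : t^2 * (2 * t * a / (1 + t ^ 2 * r ^ 2)) ^ 2 ≤ 4 / r^2 := by
    rw [div_pow, ← mul_div_assoc, div_le_div_iff₀ (by positivity) (by positivity)]
    have : t^4 * r^2 * a^2 ≤ t^4 * r^2 * r^2 := by gcongr
    nlinarith [sq_nonneg (t*r)]
  have h3 : smaF r = 4 / r^2 * 1 * (2 / (1 + r ^ 2)) ^ 4 := by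
    unfold smaF; field_simp; norm_num
  rw [h3, ← mul_assoc, ← mul_assoc, abs_mul, abs_mul, abs_of_nonneg (by positivity : 0 ≤ t^2 * (2 * t * a / (1 + t ^ 2 * r ^ 2)) ^ 2),
    abs_of_nonneg (by positivity : 0 ≤ (2 / (1 + r ^ 2)) ^ 4)]
  gcongr

lemma sma_ptlim (r a : ℝ) (hr : 0 < r) :
    Tendsto (fun t : ℝ => t^2 * ((2 * t * a / (1 + t ^ 2 * r ^ 2)) ^ 2 *
          ((t ^ 2 * r ^ 2 - 1) / (t ^ 2 * r ^ 2 + 1)) *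
          (2 / (1 + r ^ 2)) ^ 4)) atTop (nhds (a^2 / r^2 * smaF r)) := by
  have hs : Tendsto (fun t : ℝ => (t^2)⁻¹) atTop (nhds 0) :=
    (tendsto_pow_atTop (n := 2) (by norm_num)).inv_tendsto_atTop
  have hc : ContinuousAt (fun s : ℝ => (4 * a^2 / (s + r^2)^2) * ((r^2 - s)/(r^2 + s)) *
      (2 / (1 + r ^ 2)) ^ 4) 0 := by
    have h1 : ((0:ℝ) + r^2)^2 ≠ 0 := by positivity
    have h2 : (r^2 + (0:ℝ)) ≠ 0 := by positivity
    fun_prop (disch := assumption)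
  have h := hc.tendsto.comp hs
  have e : (4 * a^2 / ((0:ℝ) + r^2)^2) * ((r^2 - 0)/(r^2 + 0)) *
      (2 / (1 + r ^ 2)) ^ 4 = a^2 / r^2 * smaF r := by
    unfold smaF
    simp only [zero_add, add_zero, sub_zero]
    field_simp
    ring
  rw [e] at h
  refine h.congr' ?_
  filter_upwards [eventually_gt_atTop 0] with t ht
  simp only [Function.comp]
  have h1 : (t^2)⁻¹ + r^2 = (1 + t^2 * r^2) / t^2 := by field_simp
  have h2 : r^2 + (t^2)⁻¹ = (t^2 * r^2 + 1) / t^2 := by field_simp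
  have h3 : r^2 - (t^2)⁻¹ = (t^2 * r^2 - 1) / t^2 := by field_simp
  rw [h1, h2, h3, div_div_div_cancel_right₀ (by positivity)]
  field_simp
  try ring

/-- The asymptotic computation (out2): for every `M > 0` and coordinate `i`,
`t² ∫_{‖z‖ > M/t} (2 t z_i/(1+t²‖z‖²))² ((t²‖z‖²−1)/(t²‖z‖²+1)) (2/(1+‖z‖²))⁴ dz
→ 16π²/3` as `t → ∞`. -/
theorem second_moment_asymptotics (M : ℝ) (hM : 0 < M) (i : Fin 4) :
    Tendsto
      (fun t : ℝ => t ^ 2 * ∫ z in {z : EuclideanSpace ℝ (Fin 4) | M / t < ‖z‖},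
        (2 * t * z i / (1 + t ^ 2 * ‖z‖ ^ 2)) ^ 2 *
          ((t ^ 2 * ‖z‖ ^ 2 - 1) / (t ^ 2 * ‖z‖ ^ 2 + 1)) *
          (2 / (1 + ‖z‖ ^ 2)) ^ 4)
      atTop (nhds (16 * π ^ 2 / 3)) := by
  have hS : ∀ t : ℝ, MeasurableSet {z : EuclideanSpace ℝ (Fin 4) | M / t < ‖z‖} := fun t =>
    measurableSet_lt measurable_const measurable_norm
  have hne : ∀ᵐ z : EuclideanSpace ℝ (Fin 4), z ≠ 0 := by
    simp [ae_iff, measure_singleton]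
  simp_rw [← integral_const_mul]
  refine Tendsto.congr (fun t => integral_indicator (hS t)) ?_
  rw [← smaG_integral i]
  refine tendsto_integral_filter_of_dominated_convergence (fun z => smaF ‖z‖) ?_ ?_
    sma_integrable ?_
  · refine Eventually.of_forall fun t => ?_
    refine (Measurable.indicator ?_ (hS t)).aestronglyMeasurable
    fun_prop
  · refine Eventually.of_forall fun t => ?_
    filter_upwards [hne] with z hz
    refine (norm_indicator_le_norm_self _ _).trans ?_
    exact sma_bound t ‖z‖ (z i) (norm_pos_iff.2 hz) (sma_ratio i z)
  · filter_upwards [hne] with z hz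
    have hz' := norm_pos_iff.2 hz
    refine (sma_ptlim ‖z‖ (z i) hz').congr' ?_
    have hMt : Tendsto (fun t : ℝ => M / t) atTop (nhds 0) := tendsto_const_nhds.div_atTop tendsto_id
    filter_upwards [hMt.eventually_lt_const hz'] with t ht
    rw [Set.indicator_of_mem]
    exact ht
end

section
/- Let S⁴ be the unit sphere centered at the origin in ℝ⁵ = ℝ⁴ × ℝ, let N = (0,0,0,0,1), let μ be the 4-dimensional Hausdorff measure on ℝ⁵ restricted to S⁴, and let ι : ℝ⁴ → S⁴ \ {N} be the inverse stereographic parametrization ι(y) = (2y/(1+‖y‖²), (‖y‖²−1)/(‖y‖²+1)). For s > 0 define the conformal dilation φ_s : S⁴ → S⁴ by φ_s(N) = N and φ_s(x) = ι(s · ι⁻¹(x)) for x ≠ N. Then for every sequence (u_j) of measurable functions from S⁴ to ℝ with |u_j(x)| ≤ C for all j and x (C a fixed constant), and every sequence (t_j) of positive reals with t_j → ∞, the ℝ⁵-valued integrals satisfy ∫_{S⁴} e^{4 u_j(x)} φ_{1/t_j}(x) dμ(x) + (∫_{S⁴} e^{4 u_j(x)} dμ(x)) · N → 0 as j → ∞.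 -/
open MeasureTheory Filter

/-- The north pole `N = (0,0,0,0,1)` of the unit sphere `S⁴ ⊂ ℝ⁵`. -/
noncomputable def northPole : EuclideanSpace ℝ (Fin 5) :=
  EuclideanSpace.single (4 : Fin 5) (1 : ℝ)

/-- The inverse stereographic parametrization
`ι(y) = (2y/(1+‖y‖²), (‖y‖²−1)/(‖y‖²+1))` of `S⁴ \ {N}` by `ℝ⁴`. -/
noncomputable def invStereo (y : EuclideanSpace ℝ (Fin 4)) : EuclideanSpace ℝ (Fin 5) :=
  (EuclideanSpace.equiv (Fin 5) ℝ).symm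
    (Fin.snoc (fun i : Fin 4 => 2 * y i / (1 + ‖y‖ ^ 2))
      ((‖y‖ ^ 2 - 1) / (‖y‖ ^ 2 + 1)))

/-- The stereographic projection `ι⁻¹ : S⁴ \ {N} → ℝ⁴`, `x ↦ x'/(1 − x₅)`. -/
noncomputable def stereoProj (x : EuclideanSpace ℝ (Fin 5)) : EuclideanSpace ℝ (Fin 4) :=
  (EuclideanSpace.equiv (Fin 4) ℝ).symm
    (fun i : Fin 4 => x i.castSucc / (1 - x (4 : Fin 5)))

open scoped Classical in
/-- The conformal dilation `φ_s` of `S⁴`: `φ_s(N) = N` and `φ_s(x) = ι(s · ι⁻¹(x))`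
for `x ≠ N`. -/
noncomputable def confDil (s : ℝ) (x : EuclideanSpace ℝ (Fin 5)) :
    EuclideanSpace ℝ (Fin 5) :=
  if x = northPole then northPole else invStereo (s • stereoProj x)

lemma invStereo_castSucc (y : EuclideanSpace ℝ (Fin 4)) (i : Fin 4) :
    invStereo y i.castSucc = 2 * y i / (1 + ‖y‖ ^ 2) := by
  simp [invStereo]

lemma invStereo_last (y : EuclideanSpace ℝ (Fin 4)) :
    invStereo y (4 : Fin 5) = (‖y‖ ^ 2 - 1) / (‖y‖ ^ 2 + 1) := by
  exact Fin.snoc_last (n := 4) (α := fun _ => ℝ) ((‖y‖ ^ 2 - 1) / (‖y‖ ^ 2 + 1))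
    (fun i : Fin 4 => 2 * y i / (1 + ‖y‖ ^ 2))

lemma invStereo_contDiff : ContDiff ℝ 1 invStereo := by
  rw [contDiff_euclidean]
  intro i
  have h0 : ContDiff ℝ 1 (fun y : EuclideanSpace ℝ (Fin 4) => ‖y‖ ^ 2) := contDiff_norm_sq ℝ
  refine Fin.lastCases ?_ (fun i => ?_) i
  · have : (fun y => invStereo y (Fin.last 4)) =
      fun y => (‖y‖ ^ 2 - 1) / (‖y‖ ^ 2 + 1) := funext invStereo_last
    rw [this]
    exact (h0.sub contDiff_const).div (h0.add contDiff_const) (fun y => by positivity)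
  · have : (fun y => invStereo y i.castSucc) =
      fun y => 2 * y i / (1 + ‖y‖ ^ 2) := funext fun y => invStereo_castSucc y i
    rw [this]
    have h1 : ContDiff ℝ 1 (fun y : EuclideanSpace ℝ (Fin 4) => y i) := by fun_prop
    exact (contDiff_const.mul h1).div (contDiff_const.add h0) (fun y => by positivity)

lemma norm_sq_five (x : EuclideanSpace ℝ (Fin 5)) :
    ‖x‖ ^ 2 = (∑ i : Fin 4, x i.castSucc ^ 2) + x (4 : Fin 5) ^ 2 := by
  rw [EuclideanSpace.norm_sq_eq, Fin.sum_univ_castSucc]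
  simp only [Real.norm_eq_abs, sq_abs]
  rfl

lemma norm_sq_four (y : EuclideanSpace ℝ (Fin 4)) : ‖y‖ ^ 2 = ∑ i : Fin 4, y i ^ 2 := by
  rw [EuclideanSpace.norm_sq_eq]
  simp only [Real.norm_eq_abs, sq_abs]

lemma norm_invStereo (y : EuclideanSpace ℝ (Fin 4)) : ‖invStereo y‖ = 1 := by
  have h : ‖invStereo y‖ ^ 2 = 1 := by
    rw [norm_sq_five, invStereo_last]
    simp only [invStereo_castSucc, div_pow, mul_pow]
    rw [← Finset.sum_div, ← Finset.mul_sum, ← norm_sq_four]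
    have : (1 + ‖y‖ ^ 2) ≠ 0 := by positivity
    have : (‖y‖ ^ 2 + 1) ≠ 0 := by positivity
    field_simp
    ring
  have h0 := norm_nonneg (invStereo y)
  nlinarith

lemma invStereo_zero : invStereo 0 = -northPole := by
  ext i
  refine Fin.lastCases ?_ (fun i => ?_) i
  · rw [show Fin.last 4 = (4 : Fin 5) from rfl, invStereo_last]
    simp [northPole]
  · rw [invStereo_castSucc]
    have : i.castSucc ≠ (4 : Fin 5) := (Fin.castSucc_lt_last i).ne
    simp [northPole, this]

lemma stereoProj_apply (x : EuclideanSpace ℝ (Fin 5)) (i : Fin 4) :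
    stereoProj x i = x i.castSucc / (1 - x (4 : Fin 5)) := by
  simp [stereoProj]

lemma stereo_aux (x : EuclideanSpace ℝ (Fin 5)) (hx : ‖x‖ = 1) (h4 : x (4 : Fin 5) ≤ 0) :
    x ∈ invStereo '' Metric.closedBall 0 1 := by
  set a := x (4 : Fin 5) with ha
  have hp : (0:ℝ) < 1 - a := by linarith
  have hs : ∑ i : Fin 4, x i.castSucc ^ 2 = 1 - a ^ 2 := by
    have := norm_sq_five x
    rw [hx] at this
    linarith
  have hn : ‖stereoProj x‖ ^ 2 = (1 + a) / (1 - a) := by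
    rw [norm_sq_four]
    simp only [stereoProj_apply, div_pow]
    rw [← Finset.sum_div, hs, ← ha]
    field_simp
    ring
  refine ⟨stereoProj x, ?_, ?_⟩
  · rw [mem_closedBall_zero_iff]
    have : ‖stereoProj x‖ ^ 2 ≤ 1 := by
      rw [hn, div_le_one hp]; linarith
    nlinarith [norm_nonneg (stereoProj x)]
  · have e1 : 1 + (1 + a) / (1 - a) = 2 / (1 - a) := by field_simp; ring
    ext i
    refine Fin.lastCases ?_ (fun i => ?_) i
    · rw [show Fin.last 4 = (4 : Fin 5) from rfl, invStereo_last, hn, ← ha,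
        add_comm _ (1:ℝ), e1]
      field_simp
      ring
    · rw [invStereo_castSucc, hn, e1, stereoProj_apply, ← ha]
      field_simp

lemma sphere_finite :
    (μH[4] : Measure (EuclideanSpace ℝ (Fin 5)))
      (Metric.sphere (0 : EuclideanSpace ℝ (Fin 5)) 1) < ⊤ := by
  have key : ∀ f : EuclideanSpace ℝ (Fin 4) → EuclideanSpace ℝ (Fin 5), ContDiff ℝ 1 f →
      (μH[4] : Measure (EuclideanSpace ℝ (Fin 5))) (f '' Metric.closedBall 0 1) < ⊤ := by
    intro f hf
    obtain ⟨K, hK⟩ := hf.contDiffOn.exists_lipschitzOnWith one_ne_zero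
      (convex_closedBall (0 : EuclideanSpace ℝ (Fin 4)) 1) (isCompact_closedBall 0 1)
    have hfin : (μH[4] : Measure (EuclideanSpace ℝ (Fin 4))) (Metric.closedBall 0 1) < ⊤ := by
      have : ((Module.finrank ℝ (EuclideanSpace ℝ (Fin 4)) : ℕ) : ℝ) = 4 := by simp
      rw [← this]
      exact (isCompact_closedBall _ _).measure_lt_top
    refine (hK.hausdorffMeasure_image_le (by norm_num)).trans_lt ?_
    exact ENNReal.mul_lt_top (ENNReal.rpow_lt_top_of_nonneg (by norm_num) ENNReal.coe_ne_top) hfin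
  refine (measure_mono (t := invStereo '' Metric.closedBall 0 1 ∪
    (fun y => - invStereo y) '' Metric.closedBall 0 1) ?_).trans_lt
    ((measure_union_le _ _).trans_lt (ENNReal.add_lt_top.2
      ⟨key _ invStereo_contDiff, key _ invStereo_contDiff.neg⟩))
  intro x hx
  rw [mem_sphere_zero_iff_norm] at hx
  rcases le_total (x (4 : Fin 5)) 0 with h | h
  · exact Or.inl (stereo_aux x hx h)
  · right
    obtain ⟨y, hy, e⟩ := stereo_aux (-x) (by simpa using hx) (by simpa using h)
    exact ⟨y, hy, by simp [e]⟩

lemma norm_northPole : ‖northPole‖ = 1 := by simp [northPole]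

lemma measurable_confDil (s : ℝ) : Measurable (confDil s) := by
  have h1 : Measurable stereoProj := by
    unfold stereoProj
    refine (EuclideanSpace.equiv (Fin 4) ℝ).symm.continuous.measurable.comp ?_
    refine measurable_pi_lambda _ fun i => ?_
    exact Measurable.div (by fun_prop) (by fun_prop)
  unfold confDil
  refine Measurable.ite (measurableSet_singleton _) measurable_const ?_
  exact invStereo_contDiff.continuous.measurable.comp (h1.const_smul s)

lemma norm_confDil (s : ℝ) (x : EuclideanSpace ℝ (Fin 5)) : ‖confDil s x‖ = 1 := by
  unfold confDil
  split_ifs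
  · exact norm_northPole
  · exact norm_invStereo _

/-- Concentration of the conformal dilations: for uniformly bounded measurable `u_j`
on `S⁴` and `t_j → ∞`,
`∫_{S⁴} e^{4u_j(x)} φ_{1/t_j}(x) dμ(x) + (∫_{S⁴} e^{4u_j(x)} dμ(x)) · N → 0`,
where `μ` is the 4-dimensional Hausdorff measure restricted to `S⁴`. -/
theorem confDil_concentration
    (u : ℕ → EuclideanSpace ℝ (Fin 5) → ℝ) (C : ℝ)
    (hmeas : ∀ j, Measurable (u j))
    (hbd : ∀ j, ∀ x ∈ Metric.sphere (0 : EuclideanSpace ℝ (Fin 5)) 1, |u j x| ≤ C)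
    (t : ℕ → ℝ) (ht : ∀ j, 0 < t j) (htop : Tendsto t atTop atTop) :
    Tendsto
      (fun j =>
        (∫ x in Metric.sphere (0 : EuclideanSpace ℝ (Fin 5)) 1,
            Real.exp (4 * u j x) • confDil (1 / t j) x
          ∂(μH[4] : Measure (EuclideanSpace ℝ (Fin 5)))) +
        (∫ x in Metric.sphere (0 : EuclideanSpace ℝ (Fin 5)) 1,
            Real.exp (4 * u j x)
          ∂(μH[4] : Measure (EuclideanSpace ℝ (Fin 5)))) • northPole)
      atTop (nhds 0) := by
  set S := Metric.sphere (0 : EuclideanSpace ℝ (Fin 5)) 1 with hS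
  set ν := (μH[4] : Measure (EuclideanSpace ℝ (Fin 5))).restrict S with hν
  have : IsFiniteMeasure ν := ⟨by rw [hν, Measure.restrict_apply_univ]; exact sphere_finite⟩
  have hmem : ∀ᵐ x ∂ν, x ∈ S := ae_restrict_mem Metric.isClosed_sphere.measurableSet
  have hexp : ∀ j, ∀ x ∈ S, Real.exp (4 * u j x) ≤ Real.exp (4 * C) := fun j x hx =>
    Real.exp_le_exp.2 (by linarith [(abs_le.1 (hbd j x hx)).2])
  have hme : ∀ j, Measurable fun x => Real.exp (4 * u j x) := fun j =>
    ((hmeas j).const_mul 4).exp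
  have hi1 : ∀ j, Integrable (fun x => Real.exp (4 * u j x)) ν := fun j =>
    Integrable.of_bound (hme j).aestronglyMeasurable (Real.exp (4 * C)) <| by
      filter_upwards [hmem] with x hx
      rw [Real.norm_eq_abs, Real.abs_exp]
      exact hexp j x hx
  have hi2 : ∀ j, Integrable (fun x => Real.exp (4 * u j x) • confDil (1 / t j) x) ν := fun j =>
    Integrable.of_bound ((hme j).smul (measurable_confDil _)).aestronglyMeasurable
      (Real.exp (4 * C)) <| by
      filter_upwards [hmem] with x hx
      rw [norm_smul, norm_confDil, Real.norm_eq_abs, Real.abs_exp, mul_one]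
      exact hexp j x hx
  have heq : ∀ j, (∫ x, Real.exp (4 * u j x) • confDil (1 / t j) x ∂ν) +
      (∫ x, Real.exp (4 * u j x) ∂ν) • northPole =
      ∫ x, Real.exp (4 * u j x) • (confDil (1 / t j) x + northPole) ∂ν := by
    intro j
    rw [← integral_smul_const, ← integral_add (hi2 j) ((hi1 j).smul_const _)]
    simp only [smul_add]
  simp only [heq]
  rw [← integral_zero (EuclideanSpace ℝ (Fin 5)) (EuclideanSpace ℝ (Fin 5)) (μ := ν)]
  refine tendsto_integral_of_dominated_convergence (fun _ => Real.exp (4 * C) * 2)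
    (fun j => ((hme j).smul
      ((measurable_confDil _).add measurable_const)).aestronglyMeasurable)
    (integrable_const _) (fun j => ?_) ?_
  · filter_upwards [hmem] with x hx
    rw [norm_smul, Real.norm_eq_abs, Real.abs_exp]
    have h2 : ‖confDil (1 / t j) x + northPole‖ ≤ 2 := by
      refine (norm_add_le _ _).trans ?_
      rw [norm_confDil, norm_northPole]; norm_num
    exact mul_le_mul (hexp j x hx) h2 (norm_nonneg _) (Real.exp_pos _).le
  · have hna : NullSingletonClass (μH[4] : Measure (EuclideanSpace ℝ (Fin 5))) :=
      Measure.nullSingletonClass_hausdorff _ (by norm_num)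
    have hne : ∀ᵐ x ∂ν, x ≠ northPole := by
      refine ae_restrict_of_ae ?_
      exact measure_eq_zero_iff_ae_notMem.1 (measure_singleton northPole)
    filter_upwards [hmem, hne] with x hx hxN
    have hc : Tendsto (fun j => confDil (1 / t j) x + northPole) atTop (nhds 0) := by
      simp only [confDil, if_neg hxN]
      have h1 : Tendsto (fun j => (1 / t j) • stereoProj x) atTop (nhds 0) := by
        have : Tendsto (fun j => 1 / t j) atTop (nhds 0) := by
          simp only [one_div]
          exact htop.inv_tendsto_atTop
        simpa using this.smul_const (stereoProj x)
      have h2 := ((invStereo_contDiff.continuous.tendsto 0).comp h1).add_const northPole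
      rw [invStereo_zero, neg_add_cancel] at h2
      exact h2
    have hb := hc.norm.const_mul (Real.exp (4 * C))
    rw [norm_zero, mul_zero] at hb
    refine squeeze_zero_norm (fun j => ?_) hb
    rw [norm_smul, Real.norm_eq_abs, Real.abs_exp]
    exact mul_le_mul_of_nonneg_right (hexp j x hx) (norm_nonneg _)
end
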